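/- For every m ≥ 0, there is a unique special positive braid of length m, namely the right power 1^[m+1] = σ_m σ_{m−1} ⋯ σ₂ σ₁: if β ∈ B_∞ is special and is a product of exactly m generators σ_{i₁} ⋯ σ_{i_m}, then β = σ_m ⋯ σ₂ σ₁; and conversely σ_m ⋯ σ₂ σ₁ is special. -/

import Mathlib

/-- The braid relations on generators indexed by `ℕ` (generator `i` stands for
the Artin generator `σ_{i+1}` of the paper). -/
def braidRels : Set (FreeGroup ℕ) :=
  {r | (∃ i j : ℕ, i + 2 ≤ j ∧
          r = .of i * .of j * (.of i)⁻¹ * (.of j)⁻¹) ∨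
       (∃ i : ℕ,
          r = .of i * .of (i + 1) * .of i *
              (.of (i + 1) * .of i * .of (i + 1))⁻¹)}

/-- The braid group on infinitely many strands. -/
abbrev Binf : Type := PresentedGroup braidRels

/-- `σ i` is the Artin generator `σ_{i+1}` of the paper (0-indexed). -/
def σ (i : ℕ) : Binf := PresentedGroup.of i

lemma mk_rel_eq_one {r : FreeGroup ℕ} (h : r ∈ braidRels) :
    PresentedGroup.mk braidRels r = 1 :=
  (QuotientGroup.eq_one_iff r).mpr (Subgroup.subset_normalClosure h)

lemma shift_lift_eq_one :
    ∀ r ∈ braidRels, FreeGroup.lift (fun n => σ (n + 1)) r = 1 := by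
  intro r hr
  have key : ∀ s ∈ braidRels, FreeGroup.lift (fun n => σ (n + 1)) s
      = PresentedGroup.mk braidRels (FreeGroup.map (· + 1) s) := by
    intro s _
    have : (FreeGroup.lift (fun n => σ (n + 1)) : FreeGroup ℕ →* Binf)
        = (PresentedGroup.mk braidRels).comp (FreeGroup.map (· + 1)) := by
      apply FreeGroup.ext_hom
      intro x
      simp [σ, PresentedGroup.of]
    rw [this]; rfl
  rw [key r hr]
  apply mk_rel_eq_one
  rcases hr with ⟨i, j, hij, rfl⟩ | ⟨i, rfl⟩
  · exact Or.inl ⟨i + 1, j + 1, by omega, by simp⟩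
  · exact Or.inr ⟨i + 1, by simp⟩

/-- The shift endomorphism of the braid group, mapping `σ i` to `σ (i+1)`. -/
def sh : Binf →* Binf := PresentedGroup.toGroup shift_lift_eq_one

@[simp] lemma sh_σ (i : ℕ) : sh (σ i) = σ (i + 1) :=
  PresentedGroup.toGroup.of shift_lift_eq_one

/-- The shifted-conjugation (selfdistributive) operation on `Binf`:
`β₁ ▷ β₂ = β₁ · sh β₂ · σ₁ · (sh β₁)⁻¹`. -/
def sc (β₁ β₂ : Binf) : Binf := β₁ * sh β₂ * σ 0 * (sh β₁)⁻¹

/-- The set of special braids: the smallest subset of `Binf` containing the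
unit braid and closed under the shifted-conjugation operation `sc`. -/
def Special : Set Binf :=
  {x | ∀ P : Binf → Prop, P 1 → (∀ a b, P a → P b → P (sc a b)) → P x}

/-- `rpow a m` is the `m`-th right power `a^[m]` (defined for `m ≥ 1`;
`rpow a 0` is a junk value). -/
def rpow (a : Binf) : ℕ → Binf
  | 0 => a
  | 1 => a
  | m + 2 => sc a (rpow a (m + 1))

/-! Colour the strands of a braid by elements of a rack, a positive crossing acting on neighbouring
colours by `(a, b) ↦ (b, b ◃ a)`. By induction over shifted conjugation, for each colour `t` a
special braid sends some colouring `(x, t, t, …)` to `(t, t, …)`.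

Now take the rack `ℤ` with `a ◃ b = b - 1`. A positive crossing yields a nonnegative colouring only
if it started from one, so when a positive word sends `(x, 0, 0, …)` to `0`, every intermediate
colouring is nonnegative. The crossing at `i` subtracts one from the colour that leaves position
`i`, so each crossing, starting with the rightmost letter, must take place at the only position
that can carry a nonzero colour, and it moves that position one step to the right. This forces the
whole word. -/

section RackColoring

open scoped Quandles

variable {R : Type*} [Rack R]

/-- The action of a positive crossing of the strands `i` and `i + 1` on colourings `x` of the
strands by elements of a rack: `(x i, x (i + 1))` becomes `(x (i + 1), x (i + 1) ◃ x i)`. -/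
def crossing (i : ℕ) : Equiv.Perm (ℕ → R) where
  toFun x n := if n = i then x (i + 1) else if n = i + 1 then x (i + 1) ◃ x i else x n
  invFun x n := if n = i then x i ◃⁻¹ x (i + 1) else if n = i + 1 then x i else x n
  left_inv x := by
    funext n
    by_cases hi : n = i <;> by_cases hi' : n = i + 1 <;> simp [hi, hi']
  right_inv x := by
    funext n
    by_cases hi : n = i <;> by_cases hi' : n = i + 1 <;> simp [hi, hi']

lemma crossing_apply (i : ℕ) (x : ℕ → R) (n : ℕ) :
    crossing i x n = if n = i then x (i + 1) else if n = i + 1 then x (i + 1) ◃ x i else x n :=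
  rfl

lemma crossing_commute {i j : ℕ} (hij : i + 2 ≤ j) :
    Commute (crossing i : Equiv.Perm (ℕ → R)) (crossing j) := by
  ext x n
  simp only [Equiv.Perm.mul_apply, crossing_apply]
  grind

lemma crossing_braid (i : ℕ) :
    (crossing i * crossing (i + 1) * crossing i : Equiv.Perm (ℕ → R)) =
      crossing (i + 1) * crossing i * crossing (i + 1) := by
  ext x n
  simp only [Equiv.Perm.mul_apply, crossing_apply]
  grind [Shelf.self_distrib]

lemma lift_crossing_eq_one :
    ∀ r ∈ braidRels, FreeGroup.lift (crossing : ℕ → Equiv.Perm (ℕ → R)) r = 1 := by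
  rintro r (⟨i, j, hij, rfl⟩ | ⟨i, rfl⟩)
  · simp [(crossing_commute hij).eq]
  · simp only [map_mul, map_inv, FreeGroup.lift_apply_of]
    rw [crossing_braid, mul_inv_cancel]

/-- The action of braids on the colourings of their strands by elements of a rack. Since it is a
left action, the rightmost letter of a braid word acts first. -/
def coloringAction : Binf →* Equiv.Perm (ℕ → R) := PresentedGroup.toGroup lift_crossing_eq_one

@[simp]
lemma coloringAction_σ (i : ℕ) : coloringAction (σ i) = (crossing i : Equiv.Perm (ℕ → R)) :=
  PresentedGroup.toGroup.of lift_crossing_eq_one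

/-- The sequence with first entry `a` and remaining entries `x`, used to describe how the shift
acts on colourings. -/
def seqCons {α : Type*} (a : α) (x : ℕ → α) : ℕ → α
  | 0 => a
  | n + 1 => x n

lemma seqCons_const {α : Type*} (a : α) : seqCons a (Function.const ℕ a) = Function.const ℕ a := by
  funext n
  cases n <;> rfl

lemma crossing_zero_seqCons (a b : R) (x : ℕ → R) :
    crossing 0 (seqCons a (seqCons b x)) = seqCons b (seqCons (b ◃ a) x) := by
  funext n
  rcases n with _ | _ | n <;> rfl

lemma crossing_succ_seqCons (i : ℕ) (a : R) (x : ℕ → R) :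
    crossing (i + 1) (seqCons a x) = seqCons a (crossing i x) := by
  funext n
  cases n <;> simp [crossing_apply, seqCons]

lemma coloringAction_sh_seqCons (β : Binf) (a : R) (x : ℕ → R) :
    coloringAction (sh β) (seqCons a x) = seqCons a (coloringAction β x) := by
  have hβ : β ∈ Subgroup.closure (Set.range σ) :=
    (PresentedGroup.closure_range_of braidRels).ge (Subgroup.mem_top β)
  induction hβ using Subgroup.closure_induction generalizing x with
  | mem _ hσ =>
    obtain ⟨i, rfl⟩ := hσ
    simp only [sh_σ, coloringAction_σ, crossing_succ_seqCons]
  | one => simp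
  | mul β γ _ _ ihβ ihγ => simp [ihβ, ihγ]
  | inv β _ ih =>
    rw [map_inv, map_inv, map_inv, Equiv.Perm.inv_eq_iff_eq, ih]
    simp

lemma coloringAction_sc {a b : Binf} {x y : R} {t : ℕ → R}
    (ha : coloringAction a (seqCons x t) = t) (hb : coloringAction b (seqCons y t) = t) :
    coloringAction (sc a b) (seqCons (x ◃⁻¹ y) t) = t := by
  have ha' : (coloringAction (sh a))⁻¹ (seqCons (x ◃⁻¹ y) t) =
      seqCons (x ◃⁻¹ y) (seqCons x t) := by
    rw [Equiv.Perm.inv_eq_iff_eq, coloringAction_sh_seqCons, ha]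
  calc coloringAction (sc a b) (seqCons (x ◃⁻¹ y) t)
      = coloringAction a (coloringAction (sh b) (crossing 0
          ((coloringAction (sh a))⁻¹ (seqCons (x ◃⁻¹ y) t)))) := by
        simp only [sc, map_mul, map_inv, Equiv.Perm.mul_apply, coloringAction_σ]
    _ = coloringAction a (coloringAction (sh b) (seqCons x (seqCons y t))) := by
        rw [ha', crossing_zero_seqCons, Rack.right_inv]
    _ = t := by rw [coloringAction_sh_seqCons, hb, ha]

lemma exists_coloringAction_eq_const {β : Binf} (hβ : β ∈ Special) (t : R) :
    ∃ x : R, coloringAction β (seqCons x (Function.const ℕ t)) = Function.const ℕ t := by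
  refine hβ (fun β => ∃ x : R, coloringAction β (seqCons x (Function.const ℕ t)) = _) ?_ ?_
  · exact ⟨t, by rw [map_one, Equiv.Perm.one_apply, seqCons_const]⟩
  · rintro a b ⟨x, hx⟩ ⟨y, hy⟩
    exact ⟨x ◃⁻¹ y, coloringAction_sc hx hy⟩

end RackColoring

section IntColoring

/-- The rack structure on `ℤ` with `a ◃ b = b - 1`. A positive crossing at `i` then subtracts one
from the colour it moves from `i` to `i + 1`, so its colourings constrain positive words. -/
abbrev predRack : Rack ℤ where
  act _ b := b - 1
  self_distrib := rfl
  invAct _ b := b + 1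
  left_inv _ b := sub_add_cancel b 1
  right_inv _ b := add_sub_cancel_right b 1

attribute [local instance] predRack

lemma int_crossing_apply (i : ℕ) (x : ℕ → ℤ) (n : ℕ) :
    crossing i x n = if n = i then x (i + 1) else if n = i + 1 then x i - 1 else x n :=
  rfl

lemma nonneg_of_crossing_nonneg {i : ℕ} {x : ℕ → ℤ} (h : 0 ≤ crossing i x) : 0 ≤ x := by
  intro n
  have hn := h n
  have hi := h i
  have hi' := h (i + 1)
  simp only [int_crossing_apply, Pi.zero_apply] at hn hi hi' ⊢
  grind

lemma nonneg_of_coloringAction_nonneg (l : List ℕ) {x : ℕ → ℤ}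
    (h : 0 ≤ coloringAction (l.map σ).prod x) : 0 ≤ x := by
  induction l with
  | nil => simpa using h
  | cons i l ih =>
    rw [List.map_cons, List.prod_cons, map_mul, coloringAction_σ, Equiv.Perm.mul_apply] at h
    exact ih (nonneg_of_crossing_nonneg h)

lemma eq_of_crossing_single_nonneg {i p : ℕ} {c : ℤ} (h : 0 ≤ crossing i (Pi.single p c)) :
    i = p := by
  have hi : 0 ≤ crossing i (Pi.single p c) (i + 1) := h (i + 1)
  rw [int_crossing_apply] at hi
  by_contra hip
  simp [hip] at hi

lemma crossing_single (p : ℕ) (c : ℤ) :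
    crossing p (Pi.single p c) = Pi.single (p + 1) (c - 1) := by
  funext n
  simp only [int_crossing_apply, Pi.single_apply]
  grind

lemma eq_reverse_range'_of_coloringAction_single_eq_zero (l : List ℕ) {p : ℕ} {c : ℤ}
    (h : coloringAction (l.map σ).prod (Pi.single p c) = 0) :
    l = (List.range' p l.length).reverse := by
  induction l using List.reverseRecOn generalizing p c with
  | nil => rfl
  | append_singleton l i ih =>
    rw [List.map_append, List.prod_append, List.map_singleton, List.prod_singleton, map_mul,
      coloringAction_σ, Equiv.Perm.mul_apply] at h
    obtain rfl : i = p :=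
      eq_of_crossing_single_nonneg (nonneg_of_coloringAction_nonneg l h.ge)
    rw [crossing_single] at h
    rw [List.length_append, List.length_singleton, List.range'_succ, List.reverse_cons, ← ih h]

lemma seqCons_const_zero (c : ℤ) : seqCons c (Function.const ℕ 0) = Pi.single 0 c := by
  funext n
  cases n <;> simp [seqCons]

lemma eq_reverse_range_of_prod_mem_special {l : List ℕ} (hl : (l.map σ).prod ∈ Special) :
    l = (List.range l.length).reverse := by
  obtain ⟨c, hc⟩ := exists_coloringAction_eq_const hl (0 : ℤ)
  rw [seqCons_const_zero] at hc
  rw [List.range_eq_range']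
  exact eq_reverse_range'_of_coloringAction_single_eq_zero l hc

end IntColoring

lemma one_mem_special : 1 ∈ Special := fun _ h_one _ => h_one

lemma sc_mem_special {a b : Binf} (ha : a ∈ Special) (hb : b ∈ Special) : sc a b ∈ Special :=
  fun P h_one h_sc => h_sc a b (ha P h_one h_sc) (hb P h_one h_sc)

lemma rpow_mem_special {a : Binf} (ha : a ∈ Special) (m : ℕ) : rpow a m ∈ Special := by
  induction m using rpow.induct with
  | case1 => exact ha
  | case2 => exact ha
  | case3 m ih => exact sc_mem_special ha ih

lemma rpow_one_succ_eq_prod (m : ℕ) :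
    rpow 1 (m + 1) = ((List.range m).reverse.map σ).prod := by
  induction m with
  | zero => rfl
  | succ m ih =>
    calc rpow 1 (m + 2) = sh ((List.range m).reverse.map σ).prod * σ 0 := by
          rw [rpow, ih, sc, one_mul, map_one, inv_one, mul_one]
      _ = ((List.range (m + 1)).reverse.map σ).prod := by
          simp [List.range_succ_eq_map, map_list_prod, Function.comp_def]

/-- for every `m`, the unique special positive braid of length
`m` is the right power `1^[m+1] = σ_m ⋯ σ₂ σ₁` (0-indexed:
`σ (m-1) * ⋯ * σ 1 * σ 0 = ((List.range m).reverse.map σ).prod`). -/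
theorem unique_special_positive (m : ℕ) :
    rpow (1 : Binf) (m + 1) = ((List.range m).reverse.map σ).prod ∧
    ((List.range m).reverse.map σ).prod ∈ Special ∧
    (∀ β : Binf, β ∈ Special →
      (∃ l : List ℕ, l.length = m ∧ β = (l.map σ).prod) →
      β = ((List.range m).reverse.map σ).prod) := by
  refine ⟨rpow_one_succ_eq_prod m, ?_, ?_⟩
  · rw [← rpow_one_succ_eq_prod]
    exact rpow_mem_special one_mem_special (m + 1)
  · rintro _ hβ ⟨l, rfl, rfl⟩
    exact congrArg (fun w => (w.map σ).prod) (eq_reverse_range_of_prod_mem_special hβ)
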